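/- arXiv:1011.3062 — 2 statements merged into one kernel-verified Lean document; each statement's English description precedes it below -/
import Mathlib

section
/- Assume |A| − |B| = 1 and that every proper subset A' ⊂ A has at least |A'| neighboring nodes in B. Let O be an offer profile, M a matching in the equality subgraph EQ(O), and T an alternating tree for M in EQ(O) rooted at the unique unmatched node, such that no node of A ∩ T has an edge of E to a node of B outside T. Then T spans all nodes of A ∪ B. -/
open Classical

variable {V : Type*}

namespace GSM

/-- Symmetric adjacency induced by a set of (directed A→B) edges. -/
def Adj (E : Finset (V × V)) (a b : V) : Prop := (a, b) ∈ E ∨ (b, a) ∈ E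

/-- A path from `k` to `k'`: a nonempty list of distinct nodes starting at `k`,
ending at `k'`, with consecutive nodes adjacent. -/
def IsPath (E : Finset (V × V)) (p : List V) (k k' : V) : Prop :=
  p.head? = some k ∧ p.getLast? = some k' ∧ p.Nodup ∧ p.Chain' (Adj E)

/-- The offer induced at the end of a path, starting from offer `x` at its head:
`O_{x_0} = x` and `O_{x_{n+1}} = v_{x_{n+1}}(x_n, O_{x_n})`. -/
def pathOffer (v : V → V → ℝ → ℝ) : List V → ℝ → ℝ
  | [], x => x
  | [_], x => x
  | a :: b :: rest, x => pathOffer v (b :: rest) (v b a x)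

/-- The equality subgraph of an offer profile: edges `(i,j) ∈ E` with `O j = v j i (O i)`. -/
noncomputable def EQg (E : Finset (V × V)) (v : V → V → ℝ → ℝ) (O : V → ℝ) : Finset (V × V) :=
  E.filter fun e => O e.2 = v e.2 e.1 (O e.1)

/-- Stability of an offer profile: for every edge `(i,j) ∈ E`, `O j ≥ v j i (O i)`. -/
def Stable (E : Finset (V × V)) (v : V → V → ℝ → ℝ) (O : V → ℝ) : Prop :=
  ∀ e ∈ E, v e.2 e.1 (O e.1) ≤ O e.2

/-- A matching: no two distinct edges share a node. -/
def IsMatching (M : Finset (V × V)) : Prop :=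
  ∀ e ∈ M, ∀ e' ∈ M, e ≠ e' → e.1 ≠ e'.1 ∧ e.1 ≠ e'.2 ∧ e.2 ≠ e'.1 ∧ e.2 ≠ e'.2

/-- A node is matched if it lies on an edge of the matching. -/
def Matched (M : Finset (V × V)) (x : V) : Prop := ∃ e ∈ M, e.1 = x ∨ e.2 = x

/-- A near-perfect matching relative to the node set `X`: exactly one node of `X` is unmatched. -/
def NearPerfect (M : Finset (V × V)) (X : Finset V) : Prop :=
  ∃! x, x ∈ X ∧ ¬ Matched M x

/-- Undirected membership of an edge in an edge set. -/
def SymMem (M : Finset (V × V)) (e : V × V) : Prop := e ∈ M ∨ e.swap ∈ M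

/-- A list of nodes is alternating for the matching `M`: consecutive edges alternate
between edges of `M` and non-edges of `M`. -/
def IsAlternating (M : Finset (V × V)) (p : List V) : Prop :=
  List.Chain' (fun e e' => SymMem M e ↔ ¬ SymMem M e') (p.zip p.tail)

/-- `T` is a tree on the node set `X`: all its edges join nodes of `X` and any two
nodes of `X` are joined by a unique path in `T`. -/
def IsTreeOn (T : Finset (V × V)) (X : Finset V) : Prop :=
  (∀ e ∈ T, e.1 ∈ X ∧ e.2 ∈ X) ∧ ∀ x ∈ X, ∀ y ∈ X, ∃! p : List V, IsPath T p x y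

/-- Degree of a node: number of incident edges of `T`. -/
noncomputable def degr (T : Finset (V × V)) (x : V) : ℕ :=
  (T.filter fun e => e.1 = x ∨ e.2 = x).card

/-- An alternating tree on node set `X` for the matching `M`, rooted at `r`:
a tree containing exactly one unmatched node `r`, in which every path from `r`
is an alternating path, every node at odd distance from `r` has degree 2, and
every leaf is at even distance from `r`. -/
def IsAltTreeOn (T M : Finset (V × V)) (r : V) (X : Finset V) : Prop :=
  IsTreeOn T X ∧ r ∈ X ∧ ¬ Matched M r ∧ (∀ x ∈ X, x ≠ r → Matched M x) ∧
  (∀ x ∈ X, ∀ p : List V, IsPath T p r x → IsAlternating M p) ∧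
  (∀ x ∈ X, ∀ p : List V, IsPath T p r x →
    (Odd (p.length - 1) → degr T x = 2) ∧ (degr T x = 1 → Even (p.length - 1)))

/-- A stable alternating spanning tree generating offer profile: a stable offer profile
whose equality subgraph contains a near-perfect matching together with an associated
alternating spanning tree. -/
def SASTG (A B : Finset V) (E : Finset (V × V)) (v : V → V → ℝ → ℝ) (O : V → ℝ) : Prop :=
  Stable E v O ∧
  ∃ M T r, IsMatching M ∧ M ⊆ EQg E v O ∧ NearPerfect M (A ∪ B) ∧
    T ⊆ EQg E v O ∧ IsAltTreeOn T M r (A ∪ B)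

/-- `y` is a child of `x` in the tree `T` rooted at `r`: there is a path from `r`
to `y` in `T` whose second-to-last node is `x`. -/
def IsChild (T : Finset (V × V)) (r x y : V) : Prop :=
  ∃ p : List V, IsPath T p r y ∧ p.dropLast.getLast? = some x

/-- A node reachable by an alternating path from some unmatched node of `A`. -/
def AltReach (G M : Finset (V × V)) (A : Finset V) (x : V) : Prop :=
  ∃ i ∈ A, ¬ Matched M i ∧ ∃ p : List V, IsPath G p i x ∧ IsAlternating M p

/-!
The partner under `M` of each `B`-node `b` of the tree again lies in the tree: `b` is at odd
distance from the root, so it has a parent `a` and a further neighbour `c`, and as the path through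
`a`, `b`, `c` alternates, one of its last two edges is in `M`. Since the root is an unmatched
`A`-node, the tree has more `A`-nodes than `B`-nodes. But all neighbours of its `A`-nodes are in the
tree, so the Hall condition forces it to contain all of `A`, hence also the partners of `A`, which
are all of `B`.
-/

section

variable {A B X : Finset V} {E M T : Finset (V × V)} {p s : List V} {a b c r x y z : V}

theorem Adj.mem_of_mem_right (hab : Adj E a b) (hE : E ⊆ A ×ˢ B) (hdisj : Disjoint A B)
    (hb : b ∈ B) : (a, b) ∈ E :=
  hab.resolve_right fun h => Finset.disjoint_left.1 hdisj (Finset.mem_product.1 (hE h)).1 hb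

theorem Adj.mem_left_iff_notMem_left (hxy : Adj E x y) (hE : E ⊆ A ×ˢ B) (hdisj : Disjoint A B) :
    x ∈ A ↔ y ∉ A := by
  have hd := Finset.disjoint_left.1 hdisj
  rcases hxy with h | h <;> obtain ⟨hA, hB⟩ := Finset.mem_product.1 (hE h)
  · exact iff_of_true hA fun hy => hd hy hB
  · exact iff_of_false (fun hx => hd hx hB) (not_not.2 hA)

theorem exists_ne_mem_of_one_lt_degr (hE : E ⊆ A ×ˢ B) (hdisj : Disjoint A B) (hb : b ∈ B)
    (hdeg : 1 < degr E b) : ∃ c c', c ≠ c' ∧ (c, b) ∈ E ∧ (c', b) ∈ E := by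
  have snd_eq : ∀ e ∈ E.filter fun e => e.1 = b ∨ e.2 = b, e ∈ E ∧ e.2 = b := by
    intro e he
    obtain ⟨heE, h⟩ := Finset.mem_filter.1 he
    have he1 : e.1 ∈ A := (Finset.mem_product.1 (hE heE)).1
    exact ⟨heE, h.resolve_left fun h => Finset.disjoint_left.1 hdisj he1 (h ▸ hb)⟩
  obtain ⟨⟨c, d⟩, he, ⟨c', d'⟩, he', hne⟩ := Finset.one_lt_card.1 hdeg
  obtain ⟨hc, rfl⟩ := snd_eq _ he
  obtain ⟨hc', rfl⟩ := snd_eq _ he'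
  exact ⟨c, c', fun h => hne (by rw [h]), hc, hc'⟩

section Path

theorem IsPath.concat (hp : IsPath E p x y) (hyz : Adj E y z) (hz : z ∉ p) :
    IsPath E (p ++ [z]) x z := by
  obtain ⟨hhead, hlast, hnodup, hchain⟩ := hp
  refine ⟨by simp [hhead], List.getLast?_concat, ?_, ?_⟩
  · exact List.concat_eq_append ▸ List.Nodup.concat hz hnodup
  · exact List.isChain_append.2 ⟨hchain, List.isChain_singleton z, by simpa [hlast] using hyz⟩

theorem IsPath.of_append_cons {t : List V} (hp : IsPath E (s ++ z :: t) x y) :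
    IsPath E (s ++ [z]) x z := by
  obtain ⟨hhead, -, hnodup, hchain⟩ := hp
  have hprefix : s ++ [z] <+: s ++ z :: t := ⟨t, by simp⟩
  exact ⟨by cases s <;> simpa using hhead, List.getLast?_concat, hnodup.sublist hprefix.sublist,
    hchain.prefix hprefix⟩

theorem IsPath.exists_eq_append_pair (hp : IsPath E p x y) (hxy : x ≠ y) :
    ∃ s w, p = s ++ [w, y] ∧ Adj E w y := by
  obtain ⟨hhead, hlast, -, hchain⟩ := hp
  obtain ⟨q, rfl⟩ := List.getLast?_eq_some_iff.1 hlast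
  rcases List.eq_nil_or_concat q with rfl | ⟨s, w, rfl⟩
  · exact absurd (Option.some.inj hhead).symm hxy
  · have hpair : s.concat w ++ [y] = s ++ [w, y] := by simp
    rw [hpair] at hchain ⊢
    exact ⟨s, w, rfl, List.isChain_pair.1 (List.isChain_append.1 hchain).2.1⟩

theorem IsPath.eq_of_adj_of_mem (hp : IsPath E (s ++ [a, y]) x y) (hunique : ∃! p, IsPath E p x y)
    (hzy : Adj E z y) (hne : z ≠ y) (hz : z ∈ s ++ [a, y]) : z = a := by
  obtain ⟨s', t, ht⟩ := List.append_of_mem hz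
  have hp' : IsPath E (s' ++ z :: t) x y := ht ▸ hp
  have hyt : y ∈ t := by
    have hlast : (s' ++ z :: t).getLast? = some y := hp'.2.1
    rw [List.getLast?_append_of_ne_nil s' (List.cons_ne_nil z t)] at hlast
    exact (List.mem_cons.1 (List.mem_of_getLast? hlast)).resolve_left hne.symm
  have hy : y ∉ s' ++ [z] := by
    have hnodup : (s' ++ [z] ++ t).Nodup := by simpa using hp'.2.2.1
    exact fun h => List.disjoint_of_nodup_append hnodup h hyt
  have heq : s ++ [a, y] = s' ++ [z] ++ [y] := hunique.unique hp (hp'.of_append_cons.concat hzy hy)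
  simpa using (List.append_inj' (heq.trans (List.append_assoc ..)) rfl).2.symm

theorem even_length_iff_of_isChain_adj (hE : E ⊆ A ×ˢ B) (hdisj : Disjoint A B) :
    ∀ (x : V) (l : List V), List.IsChain (Adj E) (x :: l) → (x :: l).getLast? = some y →
      (Even l.length ↔ (x ∈ A ↔ y ∈ A))
  | x, [], _, hlast => by
    obtain rfl : x = y := Option.some.inj hlast
    exact iff_of_true Even.zero Iff.rfl
  | x, w :: l, hchain, hlast => by
    obtain ⟨hxw, hchain⟩ := List.isChain_cons_cons.1 hchain
    have ih := even_length_iff_of_isChain_adj hE hdisj w l hchain (List.getLast?_cons_cons ▸ hlast)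
    have hflip := hxw.mem_left_iff_notMem_left hE hdisj
    rw [List.length_cons, Nat.even_add_one]
    tauto

theorem IsPath.odd_length_sub_one (hp : IsPath E p a b) (hE : E ⊆ A ×ˢ B) (hdisj : Disjoint A B)
    (ha : a ∈ A) (hb : b ∈ B) : Odd (p.length - 1) := by
  obtain ⟨hhead, hlast, -, hchain⟩ := hp
  obtain ⟨l, rfl⟩ := List.head?_eq_some_iff.1 hhead
  have hbA : b ∉ A := Finset.disjoint_right.1 hdisj hb
  rw [List.length_cons, Nat.add_sub_cancel, ← Nat.not_even_iff_odd,
    even_length_iff_of_isChain_adj hE hdisj a l hchain hlast]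
  exact fun h => hbA (h.1 ha)

theorem IsAlternating.of_cons (h : IsAlternating M (x :: p)) : IsAlternating M p := by
  cases p with
  | nil => exact List.isChain_nil
  | cons y p => exact List.IsChain.tail h

theorem IsAlternating.symMem_iff_not_symMem :
    ∀ {s : List V}, IsAlternating M (s ++ [a, b, c]) → (SymMem M (a, b) ↔ ¬ SymMem M (b, c))
  | [], h => List.isChain_pair (R := fun e e' => SymMem M e ↔ ¬ SymMem M e').1 h
  | _ :: _, h => h.of_cons.symMem_iff_not_symMem

end Path

section Matching

theorem matched_iff_exists_symMem : Matched M x ↔ ∃ y, SymMem M (x, y) := by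
  constructor
  · rintro ⟨⟨u, w⟩, he, rfl | rfl⟩
    exacts [⟨w, .inl he⟩, ⟨u, .inr he⟩]
  · rintro ⟨y, he | he⟩
    exacts [⟨_, he, .inl rfl⟩, ⟨_, he, .inr rfl⟩]

theorem IsMatching.eq_of_symMem (hM : IsMatching M) (hx : SymMem M (x, z))
    (hy : SymMem M (y, z)) : x = y := by
  by_contra hxy
  rcases hx with hx | hx <;> rcases hy with hy | hy
  · exact (hM _ hx _ hy (by grind)).2.2.2 rfl
  · exact (hM _ hx _ hy (by grind)).2.2.1 rfl
  · exact (hM _ hx _ hy (by grind)).2.1 rfl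
  · exact (hM _ hx _ hy (by grind)).1 rfl

theorem IsMatching.card_le_card (hM : IsMatching M) {s t : Finset V}
    (hst : ∀ x ∈ s, ∃ y ∈ t, SymMem M (x, y)) : s.card ≤ t.card :=
  Finset.card_le_card_of_forall_subsingleton (fun x y => SymMem M (x, y)) hst
    fun _ _ _ hx _ hy => hM.eq_of_symMem hx.2 hy.2

theorem IsMatching.exists_not_matched_of_card_lt (hM : IsMatching M) (hMAB : M ⊆ A ×ˢ B)
    (hdisj : Disjoint A B) (hcard : B.card < A.card) : ∃ a ∈ A, ¬ Matched M a := by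
  by_contra! hall
  refine hcard.not_ge (hM.card_le_card fun a ha => ?_)
  obtain ⟨b, hab⟩ := matched_iff_exists_symMem.1 (hall a ha)
  refine ⟨b, hab.elim (fun h => (Finset.mem_product.1 (hMAB h)).2) fun h => ?_, hab⟩
  exact absurd (Finset.mem_product.1 (hMAB h)).2 (Finset.disjoint_left.1 hdisj ha)

theorem Matched.exists_mem (hb : Matched M b) (hMAB : M ⊆ A ×ˢ B) (hdisj : Disjoint A B)
    (hbB : b ∈ B) : ∃ a ∈ A, (a, b) ∈ M := by
  obtain ⟨a, hba⟩ := matched_iff_exists_symMem.1 hb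
  have hab : (a, b) ∈ M := Adj.mem_of_mem_right (Or.symm hba) hMAB hdisj hbB
  exact ⟨a, (Finset.mem_product.1 (hMAB hab)).1, hab⟩

end Matching

section AlternatingTree

theorem IsAltTreeOn.exists_symMem_of_mem_right (hT : IsAltTreeOn T M r X) (hTAB : T ⊆ A ×ˢ B)
    (hdisj : Disjoint A B) (hr : r ∈ A) (hb : b ∈ B) (hbX : b ∈ X) :
    ∃ a ∈ X, SymMem M (b, a) := by
  obtain ⟨⟨hTX, htree⟩, hrX, -, -, halt, hdeg⟩ := hT
  have hd := Finset.disjoint_left.1 hdisj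
  obtain ⟨p, hp, -⟩ := htree r hrX b hbX
  have hdegb : degr T b = 2 := (hdeg b hbX p hp).1 (hp.odd_length_sub_one hTAB hdisj hr hb)
  obtain ⟨s, a, rfl, hab⟩ := hp.exists_eq_append_pair fun h => hd hr (h ▸ hb)
  obtain ⟨c, hca, hcb⟩ : ∃ c, c ≠ a ∧ (c, b) ∈ T := by
    obtain ⟨c, c', hne, hc, hc'⟩ := exists_ne_mem_of_one_lt_degr hTAB hdisj hb (by omega)
    by_cases h : c = a
    exacts [⟨c', h ▸ hne.symm, hc'⟩, ⟨c, h, hc⟩]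
  have hne : c ≠ b := fun h => hd (Finset.mem_product.1 (hTAB hcb)).1 (h ▸ hb)
  have hc : c ∉ s ++ [a, b] := fun hc =>
    hca (hp.eq_of_adj_of_mem (htree r hrX b hbX) (.inl hcb) hne hc)
  have hcX : c ∈ X := (hTX _ hcb).1
  have haX : a ∈ X := (hTX _ (hab.mem_of_mem_right hTAB hdisj hb)).1
  have hpath : IsPath T (s ++ [a, b, c]) r c := by simpa using hp.concat (.inr hcb) hc
  by_cases hbc : SymMem M (b, c)
  · exact ⟨c, hcX, hbc⟩
  · exact ⟨a, haX, Or.symm ((halt c hcX _ hpath).symMem_iff_not_symMem.2 hbc)⟩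

theorem IsAltTreeOn.card_inter_lt_card_inter [DecidableEq V] (hT : IsAltTreeOn T M r X)
    (hTAB : T ⊆ A ×ˢ B) (hMAB : M ⊆ A ×ˢ B) (hM : IsMatching M) (hdisj : Disjoint A B)
    (hr : r ∈ A) : (B ∩ X).card < (A ∩ X).card := by
  have hrAX : r ∈ A ∩ X := Finset.mem_inter.2 ⟨hr, hT.2.1⟩
  refine (hM.card_le_card fun b hb => ?_).trans_lt (Finset.card_erase_lt_of_mem hrAX)
  obtain ⟨hbB, hbX⟩ := Finset.mem_inter.1 hb
  obtain ⟨a, haX, hba⟩ := hT.exists_symMem_of_mem_right hTAB hdisj hr hbB hbX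
  have hab : (a, b) ∈ M := Adj.mem_of_mem_right (Or.symm hba) hMAB hdisj hbB
  have har : a ≠ r := by
    rintro rfl
    exact hT.2.2.1 ⟨_, hab, .inl rfl⟩
  have haA : a ∈ A := (Finset.mem_product.1 (hMAB hab)).1
  exact ⟨a, Finset.mem_erase.2 ⟨har, Finset.mem_inter.2 ⟨haA, haX⟩⟩, hba⟩

end AlternatingTree

theorem subset_of_hall_of_card_inter_lt [DecidableEq V] (hE : E ⊆ A ×ˢ B) (hdisj : Disjoint A B)
    (hHall : ∀ A' ⊂ A, A'.card ≤ (B.filter fun b => ∃ a ∈ A', Adj E a b).card)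
    (hclosed : ∀ i ∈ A, i ∈ X → ∀ j ∈ B, (i, j) ∈ E → j ∈ X)
    (hcard : (B ∩ X).card < (A ∩ X).card) : A ⊆ X := by
  by_contra hAX
  have hproper : A ∩ X ⊂ A :=
    Finset.inter_subset_left.ssubset_of_ne fun h => hAX (Finset.inter_eq_left.1 h)
  have hneighbours : (B.filter fun b => ∃ a ∈ A ∩ X, Adj E a b) ⊆ B ∩ X := by
    intro b hb
    obtain ⟨hbB, a, ha, hab⟩ := Finset.mem_filter.1 hb
    obtain ⟨haA, haX⟩ := Finset.mem_inter.1 ha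
    exact Finset.mem_inter.2
      ⟨hbB, hclosed a haA haX b hbB (hab.mem_of_mem_right hE hdisj hbB)⟩
  exact hcard.not_ge ((hHall _ hproper).trans (Finset.card_le_card hneighbours))

theorem alt_tree_spans_general [DecidableEq V] (hdisj : Disjoint A B) (hE : E ⊆ A ×ˢ B)
    (hcard : B.card < A.card)
    (hHall : ∀ A' ⊂ A, A'.card ≤ (B.filter fun b => ∃ a ∈ A', Adj E a b).card)
    (hM : IsMatching M) (hME : M ⊆ E) (hTE : T ⊆ E) (hT : IsAltTreeOn T M r X)
    (hr : ∀ x ∈ A ∪ B, ¬ Matched M x → x = r)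
    (hclosed : ∀ i ∈ A, i ∈ X → ∀ j ∈ B, (i, j) ∈ E → j ∈ X) :
    A ∪ B ⊆ X := by
  have hMAB := hME.trans hE
  have hrA : r ∈ A := by
    obtain ⟨a, ha, hunmatched⟩ := hM.exists_not_matched_of_card_lt hMAB hdisj hcard
    exact hr a (Finset.mem_union_left B ha) hunmatched ▸ ha
  have hAX : A ⊆ X := subset_of_hall_of_card_inter_lt hE hdisj hHall hclosed
    (hT.card_inter_lt_card_inter (hTE.trans hE) hMAB hM hdisj hrA)
  refine Finset.union_subset hAX fun b hb => ?_
  have hbr : b ≠ r := fun h => Finset.disjoint_left.1 hdisj hrA (h ▸ hb)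
  have hmatched : Matched M b := not_not.1 fun h => hbr (hr b (Finset.mem_union_right A hb) h)
  obtain ⟨a, ha, hab⟩ := hmatched.exists_mem hMAB hdisj hb
  exact hclosed a ha (hAX ha) b hb (hME hab)

end

/-- if `|A| = |B| + 1`, every proper `A' ⊂ A` has at least `|A'|` neighbors in
`B`, and `T` is an alternating tree (rooted at the unique unmatched node) in the equality
subgraph such that no node of `A` in `T` has an edge of `E` to a node of `B` outside `T`,
then `T` spans all of `A ∪ B`. -/
theorem alt_tree_spans [Fintype V] [DecidableEq V]
    (A B : Finset V) (E : Finset (V × V))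
    (hdisj : Disjoint A B) (hA : A.Nonempty) (hB : B.Nonempty)
    (hE : E ⊆ A ×ˢ B)
    (hconn : ∀ x ∈ A ∪ B, ∀ y ∈ A ∪ B, ∃ p : List V, IsPath E p x y)
    (v : V → V → ℝ → ℝ)
    (hvC : ∀ e ∈ E, Continuous (v e.2 e.1) ∧ Continuous (v e.1 e.2))
    (hvA : ∀ e ∈ E, StrictAnti (v e.2 e.1) ∧ StrictAnti (v e.1 e.2))
    (hvInv : ∀ e ∈ E, (∀ x, v e.1 e.2 (v e.2 e.1 x) = x) ∧ (∀ x, v e.2 e.1 (v e.1 e.2 x) = x))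
    (hcard : A.card = B.card + 1)
    (hHall : ∀ A' ⊂ A, A'.card ≤ (B.filter fun b => ∃ a ∈ A', Adj E a b).card)
    (O : V → ℝ)
    (M : Finset (V × V)) (hM : IsMatching M) (hME : M ⊆ EQg E v O)
    (T : Finset (V × V)) (X : Finset V) (r : V)
    (hTE : T ⊆ EQg E v O) (hXsub : X ⊆ A ∪ B)
    (hT : IsAltTreeOn T M r X)
    (hr : ∀ x ∈ A ∪ B, ¬ Matched M x → x = r)
    (hclosed : ∀ i ∈ A, i ∈ X → ∀ j ∈ B, (i, j) ∈ E → j ∈ X) :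
    X = A ∪ B := by
  have hEQ : EQg E v O ⊆ E := Finset.filter_subset _ _
  exact hXsub.antisymm <| alt_tree_spans_general hdisj hE (by omega) hHall hM (hME.trans hEQ)
    (hTE.trans hEQ) hT hr hclosed

end GSM
end

section
/- Let O be a stable offer profile, M ⊆ E a matching, and s a nonnegative split such that for every (i,j) ∈ M: s_i + s_j = w(i,j), O_i = u_i(j, s_i) and O_j = u_j(i, s_j). Then the weighted matching (M, s) admits no blocking pair: for every edge (i,j) ∈ E there is no split (s'_i, s'_j) with s'_i + s'_j = w(i,j) such that u_i(j, s'_i) > O_i and u_j(i, s'_j) > O_j. -/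
open Classical

variable {V : Type*}

namespace GSM

/-- The pareto payoff function `v j i` of `j` against `i`: the payoff left to `j` on the edge
`(i, j)` once `i` receives `x`, where `uinv i j` stands for the inverse of `u i j`. The weight is
read in the direction `w i j`, so that `Stable E (paretoPayoff w u uinv) O` is stability for edges
directed from `A` to `B`. -/
def paretoPayoff {G P : Type*} [Sub G] (w : V → V → G) (u : V → V → G → P)
    (uinv : V → V → P → G) (j i : V) (x : P) : P :=
  u j i (w i j - uinv i j x)

/-- The edge `e` is a blocking pair for the offer profile `O`: some split of its weight gives both
endpoints strictly more than their offers. Shares may have either sign. -/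
def IsBlockingPair {G P : Type*} [Add G] [LT P] (w : V → V → G) (u : V → V → G → P)
    (O : V → P) (e : V × V) : Prop :=
  ∃ si sj : G, si + sj = w e.1 e.2 ∧ O e.1 < u e.1 e.2 si ∧ O e.2 < u e.2 e.1 sj

section

variable {G P : Type*} [AddCommGroup G] [LinearOrder G] [IsOrderedAddMonoid G] [Preorder P]
  {w : V → V → G} {u : V → V → G → P} {uinv : V → V → P → G}

theorem payoff_le_paretoPayoff_of_lt {i j : V} (hui : Monotone (u i j)) (huj : Monotone (u j i))
    {x : P} (hx : u i j (uinv i j x) = x) {si sj : G} (hsum : si + sj = w i j)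
    (hlt : x < u i j si) : u j i sj ≤ paretoPayoff w u uinv j i x := by
  have hshare : uinv i j x < si := hui.reflect_lt (hx.trans_lt hlt)
  apply huj
  calc sj = w i j - si := eq_sub_of_add_eq' hsum
    _ ≤ w i j - uinv i j x := sub_le_sub_left hshare.le _

theorem no_blocking_pair_general {E : Set (V × V)}
    (hu : ∀ e ∈ E, Monotone (u e.1 e.2) ∧ Monotone (u e.2 e.1))
    (huinv : ∀ e ∈ E, Function.RightInverse (uinv e.1 e.2) (u e.1 e.2))
    {O : V → P} (hstab : ∀ e ∈ E, paretoPayoff w u uinv e.2 e.1 (O e.1) ≤ O e.2) :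
    ∀ e ∈ E, ¬ IsBlockingPair w u O e := by
  rintro e he ⟨si, sj, hsum, hi, hj⟩
  have hpareto : u e.2 e.1 sj ≤ paretoPayoff w u uinv e.2 e.1 (O e.1) :=
    payoff_le_paretoPayoff_of_lt (hu e he).1 (hu e he).2 (huinv e he (O e.1)) hsum hi
  exact (hpareto.trans (hstab e he)).not_gt hj

end

/-- a stable offer profile realized by a weighted matching admits no blocking
pair: no edge can be split so that both endpoints get strictly more than their offers. Here
stability is expressed with the pareto payoff function `v j i x = u j i (w i j - uinv i j x)`. -/
theorem no_blocking_pair [DecidableEq V]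
    (A B : Finset V) (E : Finset (V × V))
    (hdisj : Disjoint A B) (hA : A.Nonempty) (hB : B.Nonempty)
    (hE : E ⊆ A ×ˢ B)
    (hconn : ∀ x ∈ A ∪ B, ∀ y ∈ A ∪ B, ∃ p : List V, IsPath E p x y)
    (w : V → V → ℝ) (hw : ∀ e ∈ E, 0 ≤ w e.1 e.2)
    (u uinv : V → V → ℝ → ℝ)
    (hu : ∀ e ∈ E, Continuous (u e.1 e.2) ∧ StrictMono (u e.1 e.2) ∧
      Continuous (u e.2 e.1) ∧ StrictMono (u e.2 e.1))
    (huinv : ∀ e ∈ E,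
      Function.LeftInverse (uinv e.1 e.2) (u e.1 e.2) ∧
      Function.RightInverse (uinv e.1 e.2) (u e.1 e.2) ∧
      Function.LeftInverse (uinv e.2 e.1) (u e.2 e.1) ∧
      Function.RightInverse (uinv e.2 e.1) (u e.2 e.1))
    (O : V → ℝ)
    (hstab : ∀ e ∈ E, u e.2 e.1 (w e.1 e.2 - uinv e.1 e.2 (O e.1)) ≤ O e.2)
    (M : Finset (V × V)) (hM : IsMatching M) (hME : M ⊆ E)
    (s : V → ℝ) (hs0 : ∀ k ∈ A ∪ B, 0 ≤ s k)
    (hsplit : ∀ e ∈ M, s e.1 + s e.2 = w e.1 e.2)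
    (hOs : ∀ e ∈ M, O e.1 = u e.1 e.2 (s e.1) ∧ O e.2 = u e.2 e.1 (s e.2)) :
    ∀ e ∈ E, ¬ ∃ si sj : ℝ, si + sj = w e.1 e.2 ∧
      O e.1 < u e.1 e.2 si ∧ O e.2 < u e.2 e.1 sj := by
  exact no_blocking_pair_general (E := (E : Set (V × V)))
    (fun e he => ⟨(hu e he).2.1.monotone, (hu e he).2.2.2.monotone⟩)
    (fun e he => (huinv e he).2.1) hstab

end GSM
end
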